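/- There is a decreasing chain of 12 word equations in 4 variables with solutions taken in the free monoid on two letters; explicitly, with variables x, y, z, t, the sequence xyz = zxy; xyt = txy; xyxzyz = zxzyxy; xyxtyt = txtyxy; xyxztyzt = ztxztyxy; xz = zx; xt = tx; xy = yx; x = 1; y = 1; z = 1; t = 1 is a decreasing chain. Hence dc(4) ≥ 12 for free monoids. -/

import Mathlib

/-- A monoid morphism `h` from the free monoid on the variables `Ξ` to a monoid `M`
is a solution of the equation `E = (U, V)` if `h U = h V`. -/
def IsSolution {Ξ M : Type*} [Monoid M] (h : FreeMonoid Ξ →* M)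
    (E : FreeMonoid Ξ × FreeMonoid Ξ) : Prop :=
  h E.1 = h E.2

/-- The variable `x`. -/
def x : FreeMonoid (Fin 4) := FreeMonoid.of 0
/-- The variable `y`. -/
def y : FreeMonoid (Fin 4) := FreeMonoid.of 1
/-- The variable `z`. -/
def z : FreeMonoid (Fin 4) := FreeMonoid.of 2
/-- The variable `t`. -/
def t : FreeMonoid (Fin 4) := FreeMonoid.of 3

/-- The sequence of equations `xyz = zxy; xyt = txy; xyxzyz = zxzyxy; xyxtyt = txtyxy;
xyxztyzt = ztxztyxy; xz = zx; xt = tx; xy = yx; x = 1; y = 1; z = 1; t = 1`. -/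
def chain4 : Fin 12 → FreeMonoid (Fin 4) × FreeMonoid (Fin 4) :=
  ![(x * y * z, z * x * y),
    (x * y * t, t * x * y),
    (x * y * x * z * y * z, z * x * z * y * x * y),
    (x * y * x * t * y * t, t * x * t * y * x * y),
    (x * y * x * z * t * y * z * t, z * t * x * z * t * y * x * y),
    (x * z, z * x),
    (x * t, t * x),
    (x * y, y * x),
    (x, 1),
    (y, 1),
    (z, 1),
    (t, 1)]

/-!
Write `w = xy`. The first two equations say that `z` and `t` commute with `w`, and the next three
are the single relation `w (xuy) u = u (xuy) w` at `u = z`, `u = t` and `u = zt`. This relation is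
trivial for `u = 1` and for `u = w`, while for distinct letters `x` and `y` it fails at `u = w ^ 2`.
Hence `z = w ^ 2` (with `t = 1`), `t = w ^ 2` (with `z = 1`) and `z = t = w` violate the third,
fourth and fifth equation in turn, and `z = w` or `t = w` alone satisfies all five of them without
commuting with `x`. Since the relation holds at `u` whenever `u` commutes with `x` and `w`, its
failure at `w ^ 2` forces `x` not to commute with `w`, and hence not with `y`.
-/

section Swaps

variable {M : Type*} [Monoid M] {p q r : M}

/-- `p * q` and `r` can be exchanged on the two sides of `p * r * q`. The third, fourth and fifth
equations of `chain4` are this relation for `r = z`, `r = t` and `r = z * t`. -/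
def Swaps (p q r : M) : Prop :=
  p * q * (p * r * q) * r = r * (p * r * q) * (p * q)

namespace Swaps

theorem one_right (p q : M) : Swaps p q 1 := by
  simp [Swaps]

theorem mul_right_self (p q : M) : Swaps p q (p * q) :=
  rfl

/-- Both sides are equal to `r * r * (p * q) * (p * q)`. -/
theorem of_commute (hp : Commute p r) (hpq : Commute (p * q) r) : Swaps p q r := by
  have middle : p * r * q = r * (p * q) := by rw [hp.eq, mul_assoc]
  calc p * q * (p * r * q) * r
      = (p * q) * (r * (p * q) * r) := by rw [middle, mul_assoc]
    _ = r * (p * q) * r * (p * q) := ((hpq.mul_right rfl).mul_right hpq).eq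
    _ = r * (p * r * q) * (p * q) := by rw [mul_assoc r, hpq.eq, middle]

theorem one_one (r : M) : Swaps 1 1 r :=
  of_commute (.one_left r) (by simp)

end Swaps

theorem not_commute_mul_right_of_not_swaps_sq (h : ¬ Swaps p q ((p * q) ^ 2)) :
    ¬ Commute p (p * q) :=
  fun hp ↦ h (.of_commute (hp.pow_right 2) (.self_pow (p * q) 2))

theorem not_commute_of_not_swaps_sq (h : ¬ Swaps p q ((p * q) ^ 2)) : ¬ Commute p q :=
  fun hpq ↦ not_commute_mul_right_of_not_swaps_sq h ((Commute.refl p).mul_right hpq)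

theorem not_swaps_sq_of_ne {α : Type*} {i j : α} (hij : i ≠ j) :
    ¬ Swaps (FreeMonoid.of i) (FreeMonoid.of j) ((FreeMonoid.of i * FreeMonoid.of j) ^ 2) := by
  intro h
  -- The left side starts with `ijii`, the right side with `ijij`.
  have fourth_letter : some i = some j := congrArg (fun u ↦ u.toList[3]?) h
  exact hij (Option.some.inj fourth_letter)

end Swaps

theorem isSolution_lift_chain4_iff {M : Type*} [Monoid M] (p q r s : M) (i : Fin 12) :
    IsSolution (FreeMonoid.lift ![p, q, r, s]) (chain4 i) ↔
      ![Commute (p * q) r, Commute (p * q) s, Swaps p q r, Swaps p q s, Swaps p q (r * s),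
        Commute p r, Commute p s, Commute p q, p = 1, q = 1, r = 1, s = 1] i := by
  fin_cases i <;>
    simp [IsSolution, chain4, x, y, z, t, Swaps, commute_iff_eq, mul_assoc]

theorem chain4_is_decreasing_chain_general {M : Type*} [Monoid M] {p q : M}
    (h : ¬ Swaps p q ((p * q) ^ 2)) :
    ∀ i : Fin 12, ∃ f : FreeMonoid (Fin 4) →* M,
      (∀ j : Fin 12, j < i → IsSolution f (chain4 j)) ∧ ¬ IsSolution f (chain4 i) := by
  have hpq : ¬ Commute p q := not_commute_of_not_swaps_sq h
  have hppq : ¬ Commute p (p * q) := not_commute_mul_right_of_not_swaps_sq h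
  have hp : p ≠ 1 := fun h1 ↦ hpq (h1 ▸ .one_left q)
  let assignment : Fin 12 → Fin 4 → M :=
    ![![p, 1, q, 1], ![p, 1, 1, q],
      ![p, q, (p * q) ^ 2, 1], ![p, q, 1, (p * q) ^ 2], ![p, q, p * q, p * q],
      ![p, q, p * q, 1], ![p, q, 1, p * q], ![p, q, 1, 1],
      ![p, 1, 1, 1], ![1, p, 1, 1], ![1, 1, p, 1], ![1, 1, 1, p]]
  refine fun i ↦ ⟨FreeMonoid.lift (assignment i), ?_⟩
  fin_cases i <;>
    simp [assignment, isSolution_lift_chain4_iff, Fin.forall_fin_succ, ← pow_two, h, hpq, hppq, hp,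
      Swaps.one_right, Swaps.one_one, Swaps.mul_right_self]

/-- The above sequence of 12 word equations in 4 variables is a decreasing chain,
with solutions taken in the free monoid on two letters. Hence dc(4) ≥ 12. -/
theorem chain4_is_decreasing_chain :
    ∀ i : Fin 12, ∃ h : FreeMonoid (Fin 4) →* FreeMonoid (Fin 2),
      (∀ j : Fin 12, j < i → IsSolution h (chain4 j)) ∧ ¬ IsSolution h (chain4 i) :=
  chain4_is_decreasing_chain_general (not_swaps_sq_of_ne (zero_ne_one (α := Fin 2)))
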